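/- Let F : ℝ^m → ℝ be L-smooth and bounded below, set L' = L + 1, and let (z_k) be generated by z_{k+1} = z_k + t_k s_k with ‖g_k − ∇F(z_k)‖₂ ≤ δ_k, c₁‖g_k‖₂² ≤ −g_kᵀ s_k, ‖s_k‖₂ ≤ c₂‖g_k‖₂, and δ_k ≤ β‖g_k‖₂ for some β ∈ [0, c₁/(c₂√L')). Suppose t_k ∈ [t̄₁ + γ, t̄₂ − γ] for all k, where t̄₁ = (c₁ − √Δ)/(c₂² L'), t̄₂ = (c₁ + √Δ)/(c₂² L'), Δ = c₁² − L' c₂² β², and γ ∈ (0, (t̄₂ − t̄₁)/2]. Then every limit point z* of the sequence (z_k) satisfies ∇F(z*) = 0. -/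

import Mathlib

open scoped RealInnerProductSpace

lemma descent_aux {m : ℕ} (F : EuclideanSpace ℝ (Fin m) → ℝ) (L : ℝ)
    (hdiff : Differentiable ℝ F)
    (hlip : ∀ x y : EuclideanSpace ℝ (Fin m), ‖gradient F x - gradient F y‖ ≤ L * ‖x - y‖)
    (x d : EuclideanSpace ℝ (Fin m)) :
    F (x + d) ≤ F x + ⟪gradient F x, d⟫ + L / 2 * ‖d‖ ^ 2 := by
  let h : ℝ → ℝ := fun u => F (x + u • d) - u * ⟪gradient F x, d⟫ - L / 2 * ‖d‖ ^ 2 * u ^ 2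
  have hd : ∀ u : ℝ, HasDerivAt h (⟪gradient F (x + u • d), d⟫ - ⟪gradient F x, d⟫
      - L * ‖d‖ ^ 2 * u) u := by
    intro u
    have h1 : HasDerivAt (fun u : ℝ => x + u • d) d u := by
      simpa using ((hasDerivAt_id u).smul_const d).const_add x
    have h2 := (hdiff (x + u • d)).hasGradientAt.hasFDerivAt.comp_hasDerivAt u h1
    have h3 := (h2.sub ((hasDerivAt_id u).mul_const ⟪gradient F x, d⟫)).sub
      ((hasDerivAt_pow 2 u).const_mul (L / 2 * ‖d‖ ^ 2))
    refine h3.congr_deriv ?_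
    simp
    ring
  have hanti : AntitoneOn h (Set.Icc 0 1) := by
    refine antitoneOn_of_deriv_nonpos (convex_Icc 0 1)
      (fun u _ => (hd u).continuousAt.continuousWithinAt)
      (fun u _ => (hd u).differentiableAt.differentiableWithinAt) ?_
    intro u hu
    rw [interior_Icc] at hu
    rw [(hd u).deriv, ← inner_sub_left]
    have h1 := real_inner_le_norm (gradient F (x + u • d) - gradient F x) d
    have h2 := hlip (x + u • d) x
    rw [add_sub_cancel_left, norm_smul, Real.norm_eq_abs, abs_of_pos hu.1] at h2
    have h3 := mul_le_mul_of_nonneg_right h2 (norm_nonneg d)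
    nlinarith
  have := hanti (Set.left_mem_Icc.2 zero_le_one) (Set.right_mem_Icc.2 zero_le_one) zero_le_one
  simp only [h, one_smul, zero_smul, add_zero] at this
  linarith

/-- every limit point of the iterates is a stationary point (bounded step sizes). -/
theorem stmt_8 (m : ℕ) (F : EuclideanSpace ℝ (Fin m) → ℝ) (L L' : ℝ)
    (hdiff : Differentiable ℝ F)
    (hlip : ∀ x y : EuclideanSpace ℝ (Fin m), ‖gradient F x - gradient F y‖ ≤ L * ‖x - y‖)
    (hbdd : ∃ B : ℝ, ∀ x, B ≤ F x)
    (hL' : L' = L + 1)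
    (z s g : ℕ → EuclideanSpace ℝ (Fin m)) (t δ : ℕ → ℝ)
    (c₁ c₂ : ℝ) (hc₁ : 0 < c₁) (hc₂ : 0 < c₂)
    (hδ : ∀ k, 0 ≤ δ k)
    (hupd : ∀ k, z (k + 1) = z k + t k • s k)
    (herr : ∀ k, ‖g k - gradient F (z k)‖ ≤ δ k)
    (hdesc : ∀ k, c₁ * ‖g k‖ ^ 2 ≤ -⟪g k, s k⟫)
    (hbnd : ∀ k, ‖s k‖ ≤ c₂ * ‖g k‖)
    (β : ℝ) (hβ0 : 0 ≤ β) (hβ1 : β < c₁ / (c₂ * Real.sqrt L'))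
    (hδβ : ∀ k, δ k ≤ β * ‖g k‖)
    (Δ t₁ t₂ : ℝ)
    (hΔ : Δ = c₁ ^ 2 - L' * c₂ ^ 2 * β ^ 2)
    (ht₁ : t₁ = (c₁ - Real.sqrt Δ) / (c₂ ^ 2 * L'))
    (ht₂ : t₂ = (c₁ + Real.sqrt Δ) / (c₂ ^ 2 * L'))
    (γ : ℝ) (hγ0 : 0 < γ) (hγ1 : γ ≤ (t₂ - t₁) / 2)
    (htk : ∀ k, t k ∈ Set.Icc (t₁ + γ) (t₂ - γ)) :
    ∀ zstar : EuclideanSpace ℝ (Fin m),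
      (∃ φ : ℕ → ℕ, StrictMono φ ∧
        Filter.Tendsto (fun n => z (φ n)) Filter.atTop (nhds zstar)) →
      gradient F zstar = 0 := by
  rintro zs ⟨φ, hφ, hz⟩
  obtain ⟨B, hB⟩ := hbdd
  have hLpos : 0 < L' := by
    by_contra hn
    rw [Real.sqrt_eq_zero_of_nonpos (not_lt.1 hn)] at hβ1
    simp at hβ1
    linarith
  have hA : 0 < c₂ ^ 2 * L' := by positivity
  have hΔ0 : 0 ≤ Δ := by
    have hs : 0 < c₂ * Real.sqrt L' := by positivity
    rw [lt_div_iff₀ hs] at hβ1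
    have h1 := pow_le_pow_left₀ (by positivity) hβ1.le 2
    have h2 := Real.sq_sqrt hLpos.le
    have h3 : (β * (c₂ * Real.sqrt L')) ^ 2 = L' * c₂ ^ 2 * β ^ 2 := by
      rw [mul_pow, mul_pow, h2]; ring
    rw [hΔ]; linarith
  have hsum : c₂ ^ 2 * L' * (t₁ + t₂) = 2 * c₁ := by
    rw [ht₁, ht₂]; field_simp; ring
  have hprod : c₂ ^ 2 * L' * (t₁ * t₂) = β ^ 2 := by
    have h2 := Real.sq_sqrt hΔ0
    have h3 : (c₁ - Real.sqrt Δ) * (c₁ + Real.sqrt Δ) = c₂ ^ 2 * L' * β ^ 2 := by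
      have : (c₁ - Real.sqrt Δ) * (c₁ + Real.sqrt Δ) = c₁ ^ 2 - Real.sqrt Δ ^ 2 := by ring
      rw [this, h2, hΔ]; ring
    rw [ht₁, ht₂, div_mul_div_comm, h3]
    field_simp
  have ht₁0 : 0 ≤ t₁ := by
    rw [ht₁]
    refine div_nonneg (sub_nonneg.2 ?_) hA.le
    rw [Real.sqrt_le_left hc₁.le, hΔ]
    have : 0 ≤ L' * c₂ ^ 2 * β ^ 2 := by positivity
    linarith
  have hge : ∀ k, ‖g k - gradient F (z k)‖ ≤ β * ‖g k‖ := fun k => (herr k).trans (hδβ k)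
  have hdec : ∀ k, c₂ ^ 2 * L' * γ ^ 2 / 2 * ‖g k‖ ^ 2 ≤ F (z k) - F (z (k + 1)) := by
    intro k
    obtain ⟨hl, hu⟩ := htk k
    have htpos : 0 ≤ t k := by linarith
    have h0 := descent_aux F L hdiff hlip (z k) (t k • s k)
    rw [← hupd k] at h0
    have h1 : ⟪gradient F (z k), t k • s k⟫ = t k * ⟪g k, s k⟫
        - ⟪g k - gradient F (z k), t k • s k⟫ := by
      rw [inner_sub_left, real_inner_smul_right, real_inner_smul_right]; ring
    have h2 : -⟪g k - gradient F (z k), t k • s k⟫ ≤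
        ‖g k - gradient F (z k)‖ ^ 2 / 2 + ‖t k • s k‖ ^ 2 / 2 := by
      have := norm_add_sq_real (g k - gradient F (z k)) (t k • s k)
      have := sq_nonneg ‖(g k - gradient F (z k)) + (t k • s k)‖
      linarith
    have h3 : ‖g k - gradient F (z k)‖ ^ 2 ≤ β ^ 2 * ‖g k‖ ^ 2 := by
      rw [← mul_pow]; exact pow_le_pow_left₀ (norm_nonneg _) (hge k) 2
    have h4 : ‖t k • s k‖ ^ 2 ≤ t k ^ 2 * (c₂ ^ 2 * ‖g k‖ ^ 2) := by
      rw [norm_smul, mul_pow, Real.norm_eq_abs, sq_abs, ← mul_pow c₂]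
      exact mul_le_mul_of_nonneg_left (pow_le_pow_left₀ (norm_nonneg _) (hbnd k) 2) (sq_nonneg _)
    have h5 := mul_le_mul_of_nonneg_left h4 hLpos.le
    have h6 := mul_le_mul_of_nonneg_left (hdesc k) htpos
    have h7 : γ ^ 2 ≤ (t k - t₁) * (t₂ - t k) := by nlinarith
    have h8 : c₂ ^ 2 * L' * γ ^ 2 ≤ 2 * c₁ * t k - c₂ ^ 2 * L' * t k ^ 2 - β ^ 2 := by
      have h9 := mul_le_mul_of_nonneg_left h7 hA.le
      rw [← hsum, ← hprod]
      linarith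
    have h10 := mul_le_mul_of_nonneg_right h8 (sq_nonneg ‖g k‖)
    have h11 : L' * ‖t k • s k‖ ^ 2 = L * ‖t k • s k‖ ^ 2 + ‖t k • s k‖ ^ 2 := by rw [hL']; ring
    linarith
  have hC : 0 < c₂ ^ 2 * L' * γ ^ 2 / 2 := by positivity
  have hanti : Antitone (fun k => F (z k)) := antitone_nat_of_succ_le fun k => by
    have := hdec k
    have : 0 ≤ c₂ ^ 2 * L' * γ ^ 2 / 2 * ‖g k‖ ^ 2 := by positivity
    linarith
  have hconv := tendsto_atTop_ciInf hanti ⟨B, by rintro _ ⟨k, rfl⟩; exact hB _⟩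
  have hdiff0 : Filter.Tendsto (fun k => F (z k) - F (z (k + 1))) Filter.atTop (nhds 0) := by
    simpa using hconv.sub ((Filter.tendsto_add_atTop_iff_nat 1).2 hconv)
  have hg2 : Filter.Tendsto (fun k => ‖g k‖ ^ 2) Filter.atTop (nhds 0) := by
    refine squeeze_zero (fun k => sq_nonneg _)
      (g := fun k => (F (z k) - F (z (k + 1))) / (c₂ ^ 2 * L' * γ ^ 2 / 2)) (fun k => ?_) ?_
    · rw [le_div_iff₀ hC]
      linarith [hdec k]
    · simpa using hdiff0.div_const (c₂ ^ 2 * L' * γ ^ 2 / 2)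
  have hg : Filter.Tendsto (fun k => ‖g k‖) Filter.atTop (nhds 0) := by
    simpa [Real.sqrt_sq] using hg2.sqrt
  have hlim : Filter.Tendsto (fun n => (1 + β) * ‖g (φ n)‖ + L * ‖z (φ n) - zs‖)
      Filter.atTop (nhds 0) := by
    have a := (hg.comp hφ.tendsto_atTop).const_mul (1 + β)
    have b := (tendsto_iff_norm_sub_tendsto_zero.1 hz).const_mul L
    simpa using a.add b
  have hle : ‖gradient F zs‖ ≤ 0 := by
    refine ge_of_tendsto' hlim fun n => ?_
    have h1 := hlip (z (φ n)) zs
    have h2 := hge (φ n)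
    have h3 : gradient F zs = g (φ n) - (g (φ n) - gradient F (z (φ n)))
        - (gradient F (z (φ n)) - gradient F zs) := by abel
    have h4 := norm_sub_le (g (φ n) - (g (φ n) - gradient F (z (φ n))))
      (gradient F (z (φ n)) - gradient F zs)
    have h5 := norm_sub_le (g (φ n)) (g (φ n) - gradient F (z (φ n)))
    rw [← h3] at h4
    linarith
  exact norm_le_zero_iff.1 hle
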